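/- arXiv:1503.02487 — 7 statements merged into one kernel-verified Lean document; each statement's English description precedes it below -/
import Mathlib

section
/- For every 0 ≤ i ≤ n, the smallest positive residue q̄_i satisfies the closed formula q̄_i = d·q_i·(1/(q_0·q_1) + 1/(q_1·q_2) + ⋯ + 1/(q_{i−1}·q_i)) (an identity of rational numbers, the sum being empty for i = 0). -/
/-!
Let `K_0 = 0`, `K_1 = 1`, `K_{i+2} = c_{i+1} K_{i+1} - K_i` be the continuants of the `c_i`. They
obey the recursion of the `q_i`, so `K_{i+1} q_i - K_i q_{i+1}` is constant, equal to `q_0 = d`, and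
`q K_i ≡ q_i (mod d)`. As `c_i ≥ 2`, the `K_i` increase, and the determinant identity then bounds
`K_i (q_i - q_{i+1}) < d`. This makes `K_i` the least positive solution of its congruence: a smaller
solution would differ from it by some `0 < s < K_i` with `d ∣ q s`, so `d` would divide
`(q_i - q_{i+1}) s`, which lies strictly between `0` and `d`. Hence `q̄_i = K_i`. Dividing the
determinant identity by `q_i q_{i+1}` gives `K_{i+1}/q_{i+1} - K_i/q_i = d/(q_i q_{i+1})`, which
telescopes to the closed formula.
-/

section CommRing

variable {R : Type*} [CommRing R] {c q : ℕ → R} {n : ℕ}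

/-- The (signed) continuants of a sequence `c_1, c_2, …`: the numerators of the Hirzebruch–Jung
convergents. The index is shifted so that `hjContinuant c i` is the continuant of
`c_1, …, c_{i-1}`, which makes it comparable with the remainder `q_i`; `c 0` is never read. -/
def hjContinuant (c : ℕ → R) : ℕ → R
  | 0 => 0
  | 1 => 1
  | i + 2 => c (i + 1) * hjContinuant c (i + 1) - hjContinuant c i

@[simp]
theorem hjContinuant_zero : hjContinuant c 0 = 0 := rfl

@[simp]
theorem hjContinuant_one : hjContinuant c 1 = 1 := rfl

theorem hjContinuant_add_two (i : ℕ) :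
    hjContinuant c (i + 2) = c (i + 1) * hjContinuant c (i + 1) - hjContinuant c i := rfl

theorem hjContinuant_succ_mul_sub_mul_succ
    (hrec : ∀ i < n, q i = c (i + 1) * q (i + 1) - q (i + 2)) :
    hjContinuant c (n + 1) * q n - hjContinuant c n * q (n + 1) = q 0 := by
  induction n with
  | zero => simp
  | succ n ih =>
    rw [← ih fun i hi => hrec i (by omega), hrec n (by omega), hjContinuant_add_two]
    ring

theorem dvd_mul_hjContinuant_sub
    (hrec : ∀ i, i + 1 < n → q i = c (i + 1) * q (i + 1) - q (i + 2)) :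
    q 0 ∣ q 1 * hjContinuant c n - q n := by
  induction n using Nat.twoStepInduction with
  | zero => simp
  | one => simp
  | more n ih ih_succ =>
    have hcomb : q 1 * hjContinuant c (n + 2) - q (n + 2) =
        c (n + 1) * (q 1 * hjContinuant c (n + 1) - q (n + 1)) -
          (q 1 * hjContinuant c n - q n) := by
      rw [hjContinuant_add_two]
      linear_combination -hrec n (by omega)
    rw [hcomb]
    exact dvd_sub ((ih_succ fun i hi => hrec i (by omega)).mul_left _)
      (ih fun i hi => hrec i (by omega))

theorem dvd_mul_of_dvd_mul_sub {d a x y s : R} (hxy : d ∣ a * x - y) (hs : d ∣ a * s) :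
    d ∣ y * s := by
  have hsub : y * s = a * s * x - (a * x - y) * s := by ring
  rw [hsub]
  exact dvd_sub (hs.mul_right x) (hxy.mul_right s)

end CommRing

theorem strictMonoOn_hjContinuant {R : Type*} [CommRing R] [LinearOrder R] [IsStrictOrderedRing R]
    {c : ℕ → R} {n : ℕ} (hc : ∀ i < n, 2 ≤ c (i + 1)) :
    StrictMonoOn (hjContinuant c) (Set.Iic (n + 1)) := by
  have hstep : ∀ i ≤ n, 0 ≤ hjContinuant c i ∧ hjContinuant c i < hjContinuant c (i + 1) := by
    intro i
    induction i with
    | zero => simp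
    | succ i ih =>
      intro hi
      obtain ⟨hnonneg, hlt⟩ := ih (by omega)
      have hnonneg' := hnonneg.trans hlt.le
      refine ⟨hnonneg', ?_⟩
      rw [hjContinuant_add_two]
      linarith [mul_le_mul_of_nonneg_right (hc i hi) hnonneg']
  exact strictMonoOn_Iic_of_lt_succ fun i hi => (hstep i (Nat.lt_succ_iff.mp hi)).2

theorem eq_mul_sum_of_succ_mul_sub_mul_succ {F : Type*} [Field F] {p q : ℕ → F} {d : F} {n : ℕ}
    (hp : p 0 = 0) (hq : ∀ i ≤ n, q i ≠ 0)
    (hdet : ∀ i < n, p (i + 1) * q i - p i * q (i + 1) = d) :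
    p n = d * q n * ∑ j ∈ Finset.range n, 1 / (q j * q (j + 1)) := by
  have hdiff : ∀ j ∈ Finset.range n,
      d * (1 / (q j * q (j + 1))) = p (j + 1) / q (j + 1) - p j / q j := by
    intro j hj
    have hjn := Finset.mem_range.mp hj
    have hqj := hq j hjn.le
    have hqj' := hq (j + 1) hjn
    field_simp
    linear_combination -hdet j hjn
  have htelescope : d * ∑ j ∈ Finset.range n, 1 / (q j * q (j + 1)) = p n / q n := by
    rw [Finset.mul_sum, Finset.sum_congr rfl hdiff, Finset.sum_range_sub (fun j => p j / q j), hp,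
      zero_div, sub_zero]
  rw [mul_right_comm, htelescope, div_mul_cancel₀ _ (hq n le_rfl)]

/-- The first `n` steps of the Hirzebruch–Jung expansion of `q_0 / q_1`, with remainders `q_i` and
coefficients `c_i`. The expansion may stop before the remainder reaches `0`, so that every initial
piece of an expansion is one too, and `q_0`, `q_1` may have a common factor. The recursion at `i`
is the one usually indexed by `i + 1`. -/
structure IsHJExpansion (n : ℕ) (q c : ℕ → ℤ) : Prop where
  strictAntiOn : StrictAntiOn q (Set.Iic (n + 1))
  nonneg_last : 0 ≤ q (n + 1)
  recursion : ∀ i < n, q i = c (i + 1) * q (i + 1) - q (i + 2)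

namespace IsHJExpansion

variable {m n : ℕ} {q c : ℕ → ℤ}

theorem succ_lt (h : IsHJExpansion n q c) {i : ℕ} (hi : i ≤ n) : q (i + 1) < q i :=
  h.strictAntiOn (Set.mem_Iic.mpr (by omega)) (Set.mem_Iic.mpr (by omega)) i.lt_succ_self

theorem pos (h : IsHJExpansion n q c) {i : ℕ} (hi : i ≤ n) : 0 < q i :=
  h.nonneg_last.trans_lt <|
    h.strictAntiOn (Set.mem_Iic.mpr (by omega)) Set.self_mem_Iic (Nat.lt_succ_of_le hi)

theorem of_le (h : IsHJExpansion n q c) (hmn : m ≤ n) : IsHJExpansion m q c where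
  strictAntiOn := h.strictAntiOn.mono (Set.Iic_subset_Iic.mpr (by omega))
  nonneg_last := h.nonneg_last.trans <|
    h.strictAntiOn.antitoneOn (Set.mem_Iic.mpr (by omega)) Set.self_mem_Iic (by omega)
  recursion i hi := h.recursion i (by omega)

theorem two_le (h : IsHJExpansion n q c) {i : ℕ} (hi : i < n) : 2 ≤ c (i + 1) := by
  have hrec := h.recursion i hi
  have hlt := h.succ_lt hi.le
  have hpos := h.pos (Nat.succ_le_of_lt hi)
  have hnonneg := (h.of_le (Nat.succ_le_of_lt hi)).nonneg_last
  by_contra! hc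
  have hmul : c (i + 1) * q (i + 1) ≤ 1 * q (i + 1) :=
    mul_le_mul_of_nonneg_right (by omega) hpos.le
  linarith

theorem hjContinuant_pos (h : IsHJExpansion n q c) (hn : n ≠ 0) : 0 < hjContinuant c n :=
  strictMonoOn_hjContinuant (fun _ hi => h.two_le hi) (Set.mem_Iic.mpr (by omega))
    (Set.mem_Iic.mpr (by omega)) (Nat.pos_of_ne_zero hn)

theorem sub_mul_hjContinuant_lt (h : IsHJExpansion n q c) :
    (q n - q (n + 1)) * hjContinuant c n < q 0 := by
  have hlt : hjContinuant c n < hjContinuant c (n + 1) :=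
    strictMonoOn_hjContinuant (fun _ hi => h.two_le hi) (Set.mem_Iic.mpr (by omega))
      Set.self_mem_Iic n.lt_succ_self
  calc
    (q n - q (n + 1)) * hjContinuant c n
        = hjContinuant c n * q n - hjContinuant c n * q (n + 1) := by ring
    _ < hjContinuant c (n + 1) * q n - hjContinuant c n * q (n + 1) :=
      sub_lt_sub_right (mul_lt_mul_of_pos_right hlt (h.pos le_rfl)) _
    _ = q 0 := hjContinuant_succ_mul_sub_mul_succ h.recursion

theorem isLeast_hjContinuant (h : IsHJExpansion n q c) (hn : n ≠ 0) :
    IsLeast {t : ℤ | 0 < t ∧ q 0 ∣ q 1 * t - q n} (hjContinuant c n) := by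
  have hdvd : q 0 ∣ q 1 * hjContinuant c n - q n :=
    dvd_mul_hjContinuant_sub fun i hi => h.recursion i (by omega)
  have hdvd_succ : q 0 ∣ q 1 * hjContinuant c (n + 1) - q (n + 1) :=
    dvd_mul_hjContinuant_sub fun i hi => h.recursion i (by omega)
  refine ⟨⟨h.hjContinuant_pos hn, hdvd⟩, fun t ⟨ht, htdvd⟩ => ?_⟩
  by_contra! hlt
  set s := hjContinuant c n - t with hs
  have hs_dvd : q 0 ∣ q 1 * s := by
    simpa only [hs, mul_sub, sub_sub_sub_cancel_right] using dvd_sub hdvd htdvd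
  have hdiff_dvd : q 0 ∣ (q n - q (n + 1)) * s := by
    rw [sub_mul]
    exact dvd_sub (dvd_mul_of_dvd_mul_sub hdvd hs_dvd) (dvd_mul_of_dvd_mul_sub hdvd_succ hs_dvd)
  have hdiff_pos : 0 < q n - q (n + 1) := sub_pos.mpr (h.succ_lt le_rfl)
  have hle : q 0 ≤ (q n - q (n + 1)) * s :=
    Int.le_of_dvd (mul_pos hdiff_pos (by omega)) hdiff_dvd
  have hmul_lt : (q n - q (n + 1)) * s < (q n - q (n + 1)) * hjContinuant c n :=
    mul_lt_mul_of_pos_left (by omega) hdiff_pos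
  exact (hle.trans_lt hmul_lt).not_gt h.sub_mul_hjContinuant_lt

theorem hjContinuant_eq_mul_sum (h : IsHJExpansion n q c) :
    ((hjContinuant c n : ℤ) : ℚ) =
      (q 0 : ℚ) * (q n : ℚ) * ∑ j ∈ Finset.range n, 1 / ((q j : ℚ) * (q (j + 1) : ℚ)) :=
  eq_mul_sum_of_succ_mul_sub_mul_succ (p := fun i => ((hjContinuant c i : ℤ) : ℚ))
    (q := fun i => (q i : ℚ)) (by simp) (fun _ hi => Int.cast_ne_zero.mpr (h.pos hi).ne')
    fun _ hi => by exact_mod_cast hjContinuant_succ_mul_sub_mul_succ (h.of_le hi.le).recursion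

end IsHJExpansion

theorem qbar_closed_formula_general {n : ℕ} {Q C Qbar : ℕ → ℤ} (h : IsHJExpansion n Q C)
    (hQbar0 : Qbar 0 = 0)
    (hQbar : ∀ i, 1 ≤ i → i ≤ n → IsLeast {t : ℤ | 0 < t ∧ Q 0 ∣ Q 1 * t - Q i} (Qbar i)) :
    ∀ i, i ≤ n →
      (Qbar i : ℚ) = (Q 0 : ℚ) * (Q i : ℚ) *
        ∑ j ∈ Finset.range i, 1 / ((Q j : ℚ) * (Q (j + 1) : ℚ)) := by
  intro i hi
  rcases Nat.eq_zero_or_pos i with rfl | hi_pos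
  · simp [hQbar0]
  · rw [(hQbar i hi_pos hi).unique ((h.of_le hi).isLeast_hjContinuant hi_pos.ne')]
    exact (h.of_le hi).hjContinuant_eq_mul_sum

/-- **Hirzebruch–Jung data.** Let `d > q ≥ 1` be coprime integers. The
Hirzebruch–Jung data of `d/q` consists of `q_0 = d > q_1 = q > ⋯ > q_n = 1 > q_{n+1} = 0`
and `c_i ≥ 2` with `q_{i-1} = c_i q_i − q_{i+1}`; `q̄_i` is the smallest positive integer
with `q·q̄_i ≡ q_i (mod d)` (and `q̄_0 = 0`, `q̄_{n+1} = d`).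

**Statement:** for every `0 ≤ i ≤ n`,
`q̄_i = d·q_i·(1/(q_0 q_1) + ⋯ + 1/(q_{i-1} q_i))` as rational numbers. -/
theorem qbar_closed_formula
    (n : ℕ) (d q : ℤ) (Q C Qbar : ℕ → ℤ)
    (hn : 1 ≤ n) (hq1 : 1 ≤ q) (hqd : q < d) (hcop : Int.gcd d q = 1)
    (hQ0 : Q 0 = d) (hQ1 : Q 1 = q) (hQn : Q n = 1) (hQtop : Q (n + 1) = 0)
    (hQdec : ∀ i, i ≤ n → Q (i + 1) < Q i)
    (hC : ∀ i, 1 ≤ i → i ≤ n → Q (i - 1) = C i * Q i - Q (i + 1))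
    (hC2 : ∀ i, 1 ≤ i → i ≤ n → 2 ≤ C i)
    (hQbar0 : Qbar 0 = 0) (hQbarTop : Qbar (n + 1) = d)
    (hQbarPos : ∀ i, 1 ≤ i → i ≤ n → 0 < Qbar i)
    (hQbarCong : ∀ i, 1 ≤ i → i ≤ n → d ∣ q * Qbar i - Q i)
    (hQbarMin : ∀ i, 1 ≤ i → i ≤ n → ∀ t : ℤ, 0 < t → d ∣ q * t - Q i → Qbar i ≤ t) :
    ∀ i, i ≤ n →
      (Qbar i : ℚ) = (d : ℚ) * (Q i : ℚ) *
        ∑ j ∈ Finset.range i, 1 / ((Q j : ℚ) * (Q (j + 1) : ℚ)) := by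
  subst hQ0 hQ1
  have hexp : IsHJExpansion n Q C :=
    ⟨strictAntiOn_Iic_of_succ_lt fun i hi => hQdec i (Nat.lt_succ_iff.mp hi), hQtop.ge,
      fun i hi => hC (i + 1) (Nat.succ_pos i) hi⟩
  exact qbar_closed_formula_general hexp hQbar0 fun i hi_pos hi =>
    ⟨⟨hQbarPos i hi_pos hi, hQbarCong i hi_pos hi⟩, fun t ht => hQbarMin i hi_pos hi t ht.1 ht.2⟩
end

section
/- For every 1 ≤ i ≤ n, one has q_i = q·q̄_i − d·(q̄_{X_1})_{i−1}. -/
/-!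
Let `2 ≤ i ≤ n` and consider the integer pairs `(s, t)` with `q * s - q_i = d * t`. Because
`d = c_1 * q - q_2`, an integer `s` occurs in such a pair iff `q * s ≡ q_i (mod d)`, and an integer
`t` does iff `q_2 * t ≡ q_i (mod q)`. Since `0 < q_i < q`, in every pair `s` is positive iff `t` is,
and `t` increases with `s`. So the least positive `s` and the least positive `t`, namely `q̄_i` and
`(q̄_{X_1})_{i-1}`, form a pair. For `i = 1` the identity reads `q = q * 1 - d * 0`.
-/

/-- `s` is the least positive solution of the congruence `a * s ≡ b (mod m)`. In these terms `q̄_i`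
solves `q * s ≡ q_i (mod d)`, and `(q̄_{X_1})_m` solves `q_2 * t ≡ q_{m+1} (mod q)`. -/
def IsLeastPosSolution (a b m s : ℤ) : Prop :=
  IsLeast {x | 0 < x ∧ m ∣ a * x - b} s

theorem dvd_mul_sub_iff_exists_mul_sub_eq {R : Type*} [CommRing R] {d q p : R}
    (hdp : q ∣ d + p) (r t : R) : q ∣ p * t - r ↔ ∃ s, q * s - r = d * t := by
  obtain ⟨c, hc⟩ := hdp
  constructor
  · rintro ⟨l, hl⟩
    exact ⟨c * t - l, by linear_combination hl - t * hc⟩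
  · rintro ⟨s, hs⟩
    exact ⟨c * t - s, by linear_combination hs + t * hc⟩

theorem pos_iff_pos_of_mul_sub_eq_mul {d q r s t : ℤ} (hd : 0 < d) (hr : 0 < r) (hrq : r < q)
    (h : q * s - r = d * t) : 0 < s ↔ 0 < t := by
  have hq : 0 < q := hr.trans hrq
  constructor <;> intro hpos
  · have hqs : q ≤ q * s := le_mul_of_one_le_right hq.le hpos
    exact pos_of_mul_pos_right (by linarith : 0 < d * t) hd.le
  · have hdt : 0 < d * t := mul_pos hd hpos
    exact pos_of_mul_pos_right (by linarith : 0 < q * s) hq.le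

theorem le_iff_le_of_mul_sub_eq_mul {R : Type*} [Ring R] [LinearOrder R] [IsStrictOrderedRing R]
    {d q r s s' t t' : R} (hd : 0 < d) (hq : 0 < q) (h : q * s - r = d * t)
    (h' : q * s' - r = d * t') : s ≤ s' ↔ t ≤ t' := by
  rw [← mul_le_mul_iff_right₀ hq, ← sub_le_sub_iff_right r, h, h', mul_le_mul_iff_right₀ hd]

namespace IsLeastPosSolution

theorem eq_one {a m s : ℤ} (hs : IsLeastPosSolution a a m s) : s = 1 :=
  le_antisymm (hs.2 ⟨one_pos, by simp⟩) hs.1.1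

theorem mul_sub_eq_mul {d q p r s t : ℤ} (hd : 0 < d) (hr : 0 < r) (hrq : r < q)
    (hdp : q ∣ d + p) (hs : IsLeastPosSolution q r d s) (ht : IsLeastPosSolution p r q t) :
    q * s - r = d * t := by
  obtain ⟨⟨hs_pos, k, hk⟩, hs_le⟩ := hs
  obtain ⟨⟨ht_pos, ht_dvd⟩, ht_le⟩ := ht
  obtain ⟨u, hu⟩ := (dvd_mul_sub_iff_exists_mul_sub_eq hdp r t).1 ht_dvd
  have hk_pos : 0 < k := (pos_iff_pos_of_mul_sub_eq_mul hd hr hrq hk).1 hs_pos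
  have hu_pos : 0 < u := (pos_iff_pos_of_mul_sub_eq_mul hd hr hrq hu).2 ht_pos
  have htk : t ≤ k := ht_le ⟨hk_pos, (dvd_mul_sub_iff_exists_mul_sub_eq hdp r k).2 ⟨s, hk⟩⟩
  have hsu : s ≤ u := hs_le ⟨hu_pos, t, hu⟩
  have hkt : k ≤ t := (le_iff_le_of_mul_sub_eq_mul hd (hr.trans hrq) hk hu).1 hsu
  rw [hk, hkt.antisymm htk]

end IsLeastPosSolution

theorem q_eq_q_mul_qbar_sub_general {n : ℕ} {Q Qbar QbarX₁ : ℕ → ℤ} (hQtop : Q (n + 1) = 0)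
    (hQdec : ∀ i, i ≤ n → Q (i + 1) < Q i) (hQ : Q 1 ∣ Q 0 + Q 2)
    (hQbar : ∀ i, 1 ≤ i → i ≤ n → IsLeastPosSolution (Q 1) (Q i) (Q 0) (Qbar i))
    (hX0 : QbarX₁ 0 = 0)
    (hX : ∀ m, 1 ≤ m → m ≤ n - 1 → IsLeastPosSolution (Q 2) (Q (1 + m)) (Q 1) (QbarX₁ m)) :
    ∀ i, 1 ≤ i → i ≤ n → Q i = Q 1 * Qbar i - Q 0 * QbarX₁ (i - 1) := by
  have hanti : StrictAntiOn Q (Set.Iic (n + 1)) :=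
    strictAntiOn_Iic_of_succ_lt fun i hi => hQdec i (Nat.lt_succ_iff.1 hi)
  have hQpos : ∀ i ≤ n, 0 < Q i := fun i hi =>
    hQtop ▸ hanti (Set.mem_Iic.2 (by omega)) Set.self_mem_Iic (by omega)
  intro i hi hin
  obtain rfl | hi1 := hi.eq_or_lt
  · simp [(hQbar 1 le_rfl hin).eq_one, hX0]
  · have hQlt : Q i < Q 1 := hanti (Set.mem_Iic.2 (by omega)) (Set.mem_Iic.2 (by omega)) hi1
    have hXi : IsLeastPosSolution (Q 2) (Q i) (Q 1) (QbarX₁ (i - 1)) := by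
      simpa only [Nat.add_sub_cancel' hi] using hX (i - 1) (by omega) (by omega)
    rw [← IsLeastPosSolution.mul_sub_eq_mul (hQpos 0 n.zero_le) (hQpos i hin) hQlt hQ
      (hQbar i hi hin) hXi, sub_sub_cancel]

/-- **Hirzebruch–Jung data** of `d/q` for coprime `d > q ≥ 1`:
`q_0 = d > q_1 = q > ⋯ > q_n = 1 > q_{n+1} = 0`, `c_i ≥ 2` with
`q_{i-1} = c_i q_i − q_{i+1}`; `q̄_i` is the smallest positive integer with
`q·q̄_i ≡ q_i (mod d)` (and `q̄_0 = 0`, `q̄_{n+1} = d`).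
`(q̄_{X_i})_0 = 0` and, for `1 ≤ m ≤ n−i`, `(q̄_{X_i})_m` is the smallest positive
integer `t` with `q_{i+1}·t ≡ q_{i+m} (mod q_i)` (the `q̄`-data of `X_i = X(q_i;1,q_{i+1})`).

**Statement:** for every `1 ≤ i ≤ n`, `q_i = q·q̄_i − d·(q̄_{X_1})_{i−1}`. -/
theorem q_eq_q_mul_qbar_sub
    (n : ℕ) (d q : ℤ) (Q C Qbar : ℕ → ℤ) (QbarX : ℕ → ℕ → ℤ)
    (hn : 1 ≤ n) (hq1 : 1 ≤ q) (hqd : q < d) (hcop : Int.gcd d q = 1)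
    (hQ0 : Q 0 = d) (hQ1 : Q 1 = q) (hQn : Q n = 1) (hQtop : Q (n + 1) = 0)
    (hQdec : ∀ i, i ≤ n → Q (i + 1) < Q i)
    (hC : ∀ i, 1 ≤ i → i ≤ n → Q (i - 1) = C i * Q i - Q (i + 1))
    (hC2 : ∀ i, 1 ≤ i → i ≤ n → 2 ≤ C i)
    (hQbar0 : Qbar 0 = 0) (hQbarTop : Qbar (n + 1) = d)
    (hQbarPos : ∀ i, 1 ≤ i → i ≤ n → 0 < Qbar i)
    (hQbarCong : ∀ i, 1 ≤ i → i ≤ n → d ∣ q * Qbar i - Q i)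
    (hQbarMin : ∀ i, 1 ≤ i → i ≤ n → ∀ t : ℤ, 0 < t → d ∣ q * t - Q i → Qbar i ≤ t)
    (hX0 : ∀ i, i ≤ n → QbarX i 0 = 0)
    (hXpos : ∀ i m, i + 1 ≤ n → 1 ≤ m → m ≤ n - i → 0 < QbarX i m)
    (hXcong : ∀ i m, i + 1 ≤ n → 1 ≤ m → m ≤ n - i →
      Q i ∣ Q (i + 1) * QbarX i m - Q (i + m))
    (hXmin : ∀ i m, i + 1 ≤ n → 1 ≤ m → m ≤ n - i →
      ∀ t : ℤ, 0 < t → Q i ∣ Q (i + 1) * t - Q (i + m) → QbarX i m ≤ t) :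
    ∀ i, 1 ≤ i → i ≤ n → Q i = q * Qbar i - d * QbarX 1 (i - 1) := by
  subst hQ0 hQ1
  exact q_eq_q_mul_qbar_sub_general hQtop hQdec ⟨C 1, by linarith [hC 1 le_rfl hn]⟩
    (fun i hi hin => ⟨⟨hQbarPos i hi hin, hQbarCong i hi hin⟩,
      fun t ht => hQbarMin i hi hin t ht.1 ht.2⟩) (hX0 1 hn)
    (fun m hm hmn => ⟨⟨hXpos 1 m (by omega) hm hmn, hXcong 1 m (by omega) hm hmn⟩,
      fun t ht => hXmin 1 m (by omega) hm hmn t ht.1 ht.2⟩)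
end

section
/- The greedy algorithm is optimal for the coin system (q_0, q_1, …, q_n) arising from a Hirzebruch–Jung continued fraction: for every integer k ≥ 0, if (g_0, g_1, …, g_n) are the greedy digits of k (g_0 = ⌊k/q_0⌋, and recursively g_i = ⌊r_{i−1}/q_i⌋ where r_{i−1} is the remainder after using coins q_0,…,q_{i−1}), then for every tuple (a_0, a_1, …, a_n) of non-negative integers with a_0·q_0 + a_1·q_1 + ⋯ + a_n·q_n = k one has g_0 + g_1 + ⋯ + g_n ≤ a_0 + a_1 + ⋯ + a_n. -/
/-!
Let `G(k)` be the number of coins the greedy algorithm spends on `k`. It suffices that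
`G(k + q_i) ≤ G(k) + 1`: building up `k = ∑ a_i q_i` from `0` coin by coin then gives
`G(k) ≤ ∑ a_i`.

This is proved by induction on the number of coins; let `T` be the count for `q_1, …, q_n`. Since
`G(k + q_0) = G(k) + 1`, we may assume `0 ≤ k < q_0`, so that `G(k) = T(k)`. If `k + q_i < q_0`, the
inductive hypothesis applies. Otherwise there is a carry, and the claim is
`T(k + q_i - q_0) ≤ T(k)`. As `q_0 = c q_1 - q_2` with `c ≥ 2`, adding `c` coins `q_1` gives
`T(k + q_i - q_0) + c = T(k + q_i + q_2) ≤ T(k) + 2` by the inductive hypothesis used twice.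
-/

/-- The remainders of the greedy change-making algorithm for the coin system
`Q 0, Q 1, …`: `r_0 = k % Q 0` and `r_{i+1} = r_i % Q (i+1)`. -/
def hjRem (Q : ℕ → ℤ) (k : ℤ) : ℕ → ℤ
  | 0 => k % Q 0
  | i + 1 => hjRem Q k i % Q (i + 1)

/-- The greedy digits for the coin system `Q 0, Q 1, …`:
`g_0 = ⌊k / Q 0⌋` and `g_{i+1} = ⌊r_i / Q (i+1)⌋`. -/
def hjGreedy (Q : ℕ → ℤ) (k : ℤ) : ℕ → ℤ
  | 0 => k / Q 0
  | i + 1 => hjRem Q k i / Q (i + 1)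

section Increments

variable {ι M N : Type*} [AddCommGroup M] [AddCommGroup N] [PartialOrder N]
  [IsOrderedAddMonoid N] {f : M → N}

lemma apply_add_zsmul_le {v : M} {w : N} (hf : ∀ x, f (x + v) ≤ f x + w)
    {t : ℤ} (ht : 0 ≤ t) (x : M) : f (x + t • v) ≤ f x + t • w := by
  induction t, ht using Int.leInduction with
  | base => simp only [zero_smul, add_zero, le_refl]
  | succ t _ ih =>
    calc f (x + (t + 1) • v) = f (x + t • v + v) := by rw [add_one_zsmul, add_assoc]
      _ ≤ f (x + t • v) + w := hf _
      _ ≤ f x + t • w + w := by gcongr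
      _ = f x + (t + 1) • w := by rw [add_one_zsmul, add_assoc]

lemma apply_add_sum_zsmul_le {s : Finset ι} {v : ι → M} {w : ι → N} {a : ι → ℤ}
    (hf : ∀ i ∈ s, ∀ x, f (x + v i) ≤ f x + w i) (ha : ∀ i ∈ s, 0 ≤ a i) (x : M) :
    f (x + ∑ i ∈ s, a i • v i) ≤ f x + ∑ i ∈ s, a i • w i := by
  induction s using Finset.cons_induction generalizing x with
  | empty => simp only [Finset.sum_empty, add_zero, le_refl]
  | cons j s hj ih =>
    rw [Finset.forall_mem_cons] at hf ha
    rw [Finset.sum_cons, Finset.sum_cons, ← add_assoc, ← add_assoc]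
    calc f (x + a j • v j + ∑ i ∈ s, a i • v i)
        ≤ f (x + a j • v j) + ∑ i ∈ s, a i • w i := ih hf.2 ha.2 _
      _ ≤ f x + a j • w j + ∑ i ∈ s, a i • w i := by
        gcongr
        exact apply_add_zsmul_le hf.1 ha.1 x

end Increments

section GreedyCount

/-- The number of coins the greedy algorithm spends on the amount `k` using only the first `m`
coins `Q 0, …, Q (m - 1)`. A remainder that these coins cannot pay is ignored, so that the count
makes sense for every `k`. -/
def hjCount (Q : ℕ → ℤ) (m : ℕ) (k : ℤ) : ℤ :=
  ∑ i ∈ Finset.range m, hjGreedy Q k i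

variable (Q : ℕ → ℤ) (m : ℕ) (k : ℤ)

lemma hjRem_succ_eq_tail (i : ℕ) :
    hjRem Q k (i + 1) = hjRem (fun j ↦ Q (j + 1)) (k % Q 0) i := by
  induction i with
  | zero => rfl
  | succ i ih => rw [hjRem, ih, hjRem]

lemma hjGreedy_succ_eq_tail (i : ℕ) :
    hjGreedy Q k (i + 1) = hjGreedy (fun j ↦ Q (j + 1)) (k % Q 0) i := by
  cases i with
  | zero => rfl
  | succ i => rw [hjGreedy, hjRem_succ_eq_tail, hjGreedy]

lemma hjCount_succ :
    hjCount Q (m + 1) k = k / Q 0 + hjCount (fun j ↦ Q (j + 1)) m (k % Q 0) := by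
  rw [hjCount, Finset.sum_range_succ', add_comm]
  simp only [hjGreedy_succ_eq_tail, hjCount]
  rfl

lemma hjCount_apply_zero : hjCount Q m 0 = 0 := by
  induction m generalizing Q with
  | zero => rfl
  | succ m ih => rw [hjCount_succ, Int.zero_ediv, Int.zero_emod, ih, add_zero]

variable {Q}

lemma hjCount_add_mul (hQ : Q 0 ≠ 0) (c : ℤ) :
    hjCount Q (m + 1) (k + c * Q 0) = hjCount Q (m + 1) k + c := by
  rw [hjCount_succ, hjCount_succ, Int.add_mul_ediv_right _ _ hQ, Int.add_mul_emod_self_right,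
    add_right_comm]

lemma hjCount_succ_of_lt {k : ℤ} (hk₀ : 0 ≤ k) (hk : k < Q 0) :
    hjCount Q (m + 1) k = hjCount (fun j ↦ Q (j + 1)) m k := by
  rw [hjCount_succ, Int.ediv_eq_zero_of_lt hk₀ hk, Int.emod_eq_of_lt hk₀ hk, zero_add]

end GreedyCount

/-- `Q 0 > Q 1 > ⋯ > Q m = 0` is the sequence of remainders of a Hirzebruch–Jung (ceiling)
division algorithm, with `c` the coefficients of the continued fraction of `Q 0 / Q 1`. Its last
nonzero term `Q (m - 1)` is the gcd of `Q 0` and `Q 1`, which may differ from `1`. -/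
structure IsHJChain (Q : ℕ → ℤ) (m : ℕ) : Prop where
  last_eq_zero : Q m = 0
  succ_lt : ∀ i < m, Q (i + 1) < Q i
  exists_coeff : ∀ i, i + 1 < m → ∃ c, Q i = c * Q (i + 1) - Q (i + 2)

namespace IsHJChain

variable {Q : ℕ → ℤ} {m i : ℕ}

lemma tail (hQ : IsHJChain Q (m + 1)) : IsHJChain (fun j ↦ Q (j + 1)) m where
  last_eq_zero := hQ.last_eq_zero
  succ_lt i hi := hQ.succ_lt (i + 1) (by lia)
  exists_coeff i hi := hQ.exists_coeff (i + 1) (by lia)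

lemma strictAntiOn (hQ : IsHJChain Q m) : StrictAntiOn Q (Set.Iic m) :=
  strictAntiOn_of_succ_lt Set.ordConnected_Iic fun i _ _ hi ↦ hQ.succ_lt i hi

lemma lt_head (hQ : IsHJChain Q m) (hi₀ : 0 < i) (hi : i ≤ m) : Q i < Q 0 :=
  hQ.strictAntiOn (Nat.zero_le m) hi hi₀

lemma pos (hQ : IsHJChain Q m) (hi : i < m) : 0 < Q i :=
  hQ.last_eq_zero ▸ hQ.strictAntiOn hi.le Set.self_mem_Iic hi

lemma nonneg (hQ : IsHJChain Q m) (hi : i ≤ m) : 0 ≤ Q i :=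
  hQ.last_eq_zero ▸ hQ.strictAntiOn.antitoneOn hi Set.self_mem_Iic hi

lemma exists_two_le_coeff (hQ : IsHJChain Q m) (hi : i + 1 < m) :
    ∃ c, 2 ≤ c ∧ Q i = c * Q (i + 1) - Q (i + 2) := by
  obtain ⟨c, hc⟩ := hQ.exists_coeff i hi
  refine ⟨c, ?_, hc⟩
  have hlt : 1 * Q (i + 1) < c * Q (i + 1) := by
    linarith [hQ.succ_lt i (by lia), hQ.nonneg (i := i + 2) hi]
  exact lt_of_mul_lt_mul_right hlt (hQ.pos hi).le

lemma hjCount_tail_add_sub_le (hQ : IsHJChain Q (m + 1))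
    (htail : ∀ j ≤ m, ∀ k, hjCount (fun j ↦ Q (j + 1)) m (k + Q (j + 1)) ≤
      hjCount (fun j ↦ Q (j + 1)) m k + 1) (hi : i ≤ m) (k : ℤ) :
    hjCount (fun j ↦ Q (j + 1)) m (k + Q (i + 1) - Q 0) ≤
      hjCount (fun j ↦ Q (j + 1)) m k := by
  rcases m with _ | m
  · exact le_rfl
  set T := hjCount (fun j ↦ Q (j + 1)) (m + 1)
  obtain ⟨c, hc, hrel⟩ := hQ.exists_two_le_coeff (i := 0) (by lia)
  have hcount : T (k + Q (i + 1) - Q 0) + c ≤ T k + 2 :=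
    calc T (k + Q (i + 1) - Q 0) + c
        = T (k + Q (i + 1) - Q 0 + c * Q 1) :=
          (hjCount_add_mul m _ (hQ.pos (i := 1) (by lia)).ne' c).symm
      _ = T (k + Q (i + 1) + Q 2) := by rw [hrel]; ring_nf
      _ ≤ T (k + Q (i + 1)) + 1 := htail 1 (by lia) _
      _ ≤ T k + 2 := by linarith [htail i hi k]
  linarith

lemma hjCount_add_le_of_lt_head (hQ : IsHJChain Q (m + 1))
    (htail : ∀ j ≤ m, ∀ k, hjCount (fun j ↦ Q (j + 1)) m (k + Q (j + 1)) ≤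
      hjCount (fun j ↦ Q (j + 1)) m k + 1) (hi : i ≤ m) {k : ℤ} (hk₀ : 0 ≤ k) (hk : k < Q 0) :
    hjCount Q (m + 1) (k + Q (i + 1)) ≤ hjCount Q (m + 1) k + 1 := by
  have hcoin₀ : 0 ≤ Q (i + 1) := hQ.nonneg (by lia)
  have hcoin : Q (i + 1) < Q 0 := hQ.lt_head (by lia) (by lia)
  rw [hjCount_succ_of_lt m hk₀ hk]
  rcases lt_or_ge (k + Q (i + 1)) (Q 0) with hlt | hcarry
  · rw [hjCount_succ_of_lt m (by lia) hlt]
    exact htail i hi k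
  · have hsplit : k + Q (i + 1) = k + Q (i + 1) - Q 0 + 1 * Q 0 := by ring
    rw [hsplit, hjCount_add_mul m _ (hQ.pos (by lia)).ne',
      hjCount_succ_of_lt m (by lia) (by lia)]
    gcongr
    exact hQ.hjCount_tail_add_sub_le htail hi k

/-- The index `i = m`, where the coin is `Q m = 0`, is included because the relation
`Q i = c * Q (i + 1) - Q (i + 2)` at the end of the chain involves it. -/
lemma hjCount_add_le (hQ : IsHJChain Q m) (hi : i ≤ m) (k : ℤ) :
    hjCount Q m (k + Q i) ≤ hjCount Q m k + 1 := by
  induction m generalizing Q i k with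
  | zero => exact zero_le_one
  | succ m ih =>
    have h₀ : 0 < Q 0 := hQ.pos (by lia)
    rcases i with _ | i
    · simpa only [one_mul] using (hjCount_add_mul m k h₀.ne' 1).le
    set r := k % Q 0
    have hk : k = r + k / Q 0 * Q 0 := (Int.emod_add_ediv_mul k (Q 0)).symm
    have hr : hjCount Q (m + 1) (r + Q (i + 1)) ≤ hjCount Q (m + 1) r + 1 :=
      hQ.hjCount_add_le_of_lt_head (fun j hj x ↦ ih hQ.tail hj x) (by lia)
        (Int.emod_nonneg k h₀.ne') (Int.emod_lt_of_pos k h₀)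
    rw [hk, add_right_comm, hjCount_add_mul m _ h₀.ne', hjCount_add_mul m _ h₀.ne']
    linarith

end IsHJChain

theorem greedy_is_optimal_for_HJ_coins_general {Q : ℕ → ℤ} {m : ℕ} (hQ : IsHJChain Q m)
    {a : ℕ → ℤ} (ha : ∀ i < m, 0 ≤ a i) :
    ∑ i ∈ Finset.range m, hjGreedy Q (∑ i ∈ Finset.range m, a i * Q i) i ≤
      ∑ i ∈ Finset.range m, a i := by
  have hadd : ∀ i ∈ Finset.range m, ∀ k, hjCount Q m (k + Q i) ≤ hjCount Q m k + 1 :=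
    fun i hi ↦ hQ.hjCount_add_le (Finset.mem_range.mp hi).le
  have hcount := apply_add_sum_zsmul_le hadd (fun i hi ↦ ha i (Finset.mem_range.mp hi)) 0
  simp only [smul_eq_mul, mul_one, zero_add, hjCount_apply_zero] at hcount
  exact hcount

/-- **Hirzebruch–Jung data** of `d/q` for coprime `d > q ≥ 1`:
`q_0 = d > q_1 = q > ⋯ > q_n = 1 > q_{n+1} = 0`, `c_i ≥ 2` with
`q_{i-1} = c_i q_i − q_{i+1}`.

**Statement:** the greedy algorithm is optimal for the coin system
`(q_0, …, q_n)`: for every `k ≥ 0` and every tuple `(a_0, …, a_n)` of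
non-negative integers with `Σ a_i q_i = k`, the greedy digits `(g_0, …, g_n)`
of `k` satisfy `Σ g_i ≤ Σ a_i`. -/
theorem greedy_is_optimal_for_HJ_coins
    (n : ℕ) (d q : ℤ) (Q C : ℕ → ℤ)
    (hn : 1 ≤ n) (hq1 : 1 ≤ q) (hqd : q < d) (hcop : Int.gcd d q = 1)
    (hQ0 : Q 0 = d) (hQ1 : Q 1 = q) (hQn : Q n = 1) (hQtop : Q (n + 1) = 0)
    (hQdec : ∀ i, i ≤ n → Q (i + 1) < Q i)
    (hC : ∀ i, 1 ≤ i → i ≤ n → Q (i - 1) = C i * Q i - Q (i + 1))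
    (hC2 : ∀ i, 1 ≤ i → i ≤ n → 2 ≤ C i)
    (k : ℤ) (hk : 0 ≤ k)
    (a : ℕ → ℤ) (ha : ∀ i, i ≤ n → 0 ≤ a i)
    (hsum : ∑ i ∈ Finset.range (n + 1), a i * Q i = k) :
    ∑ i ∈ Finset.range (n + 1), hjGreedy Q k i ≤ ∑ i ∈ Finset.range (n + 1), a i := by
  subst hsum
  exact greedy_is_optimal_for_HJ_coins_general
    ⟨hQtop, fun i hi ↦ hQdec i (by lia), fun i hi ↦ ⟨C (i + 1), hC (i + 1) (by lia) (by lia)⟩⟩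
    fun i hi ↦ ha i (by lia)
end

section
/- Let d ≥ 1 and a, b, p, q be integers with p, q ≥ 1 and gcd(d, a, b) = 1, and set e := gcd(d, p·b − q·a). Then for all integers u, v: if d divides a·u + b·v, then e divides p·u + q·v. Consequently, if i₀, j₀ are integers and ν := p·i₀ + q·j₀, k := a·i₀ + b·j₀, then {(i,j) ∈ ℤ² : p·i + q·j ≤ ν and a·i + b·j ≡ k (mod d)} = {(i,j) ∈ ℤ² : p·i + q·j ≤ ν, p·i + q·j ≡ ν (mod e), and a·i + b·j ≡ k (mod d)}. -/
/-!
Put `w = p * u + q * v`, `D = p * b - q * a` and `e = gcd d D`. As in Cramer's rule, `a * w` and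
`b * w` are linear combinations of `a * u + b * v` and the determinant `D`, so `e` divides `d * w`,
`a * w` and `b * w`, hence also `gcd (gcd d a) b * w`, an associate of `w`. Taking `(u, v)` to be
the difference of two points, the congruence modulo `d` implies the one modulo `e`.
-/

theorem dvd_gcd_mul_of_dvd_mul_of_dvd_mul {M : Type*} [CommMonoidWithZero M] [GCDMonoid M]
    {k m n w : M} (hm : k ∣ m * w) (hn : k ∣ n * w) : k ∣ gcd m n * w :=
  (dvd_gcd hm hn).trans (gcd_mul_right' w m n).dvd

section

variable {R : Type*} [CommRing R]

theorem dvd_mul_add_of_dvd_det {e a b p q u v : R} (hdet : e ∣ p * b - q * a)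
    (hform : e ∣ a * u + b * v) : e ∣ a * (p * u + q * v) := by
  have cramer : a * (p * u + q * v) = p * (a * u + b * v) - v * (p * b - q * a) := by ring
  rw [cramer]
  exact dvd_sub (hform.mul_left p) (hdet.mul_left v)

variable [GCDMonoid R] {d a b : R}

theorem gcd_det_dvd_of_dvd (hgcd : IsUnit (gcd (gcd d a) b)) (p q : R) {u v : R}
    (h : d ∣ a * u + b * v) : gcd d (p * b - q * a) ∣ p * u + q * v := by
  set e := gcd d (p * b - q * a)
  have hed : e ∣ d := gcd_dvd_left ..
  have hdet : e ∣ p * b - q * a := gcd_dvd_right ..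
  have hform : e ∣ a * u + b * v := hed.trans h
  have ha : e ∣ a * (p * u + q * v) := dvd_mul_add_of_dvd_det hdet hform
  have hb : e ∣ b * (p * u + q * v) := by
    rw [add_comm (p * u)]
    exact dvd_mul_add_of_dvd_det (dvd_sub_comm.mp hdet) (by rwa [add_comm])
  have hda : e ∣ gcd d a * (p * u + q * v) :=
    dvd_gcd_mul_of_dvd_mul_of_dvd_mul (hed.mul_right _) ha
  exact hgcd.dvd_mul_left.mp (dvd_gcd_mul_of_dvd_mul_of_dvd_mul hda hb)

theorem gcd_det_dvd_sub_of_dvd_sub (hgcd : IsUnit (gcd (gcd d a) b)) (p q : R) {i j i₀ j₀ : R}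
    (h : d ∣ (a * i + b * j) - (a * i₀ + b * j₀)) :
    gcd d (p * b - q * a) ∣ (p * i + q * j) - (p * i₀ + q * j₀) := by
  rw [add_sub_add_comm, ← mul_sub, ← mul_sub] at h ⊢
  exact gcd_det_dvd_of_dvd hgcd p q h

theorem lattice_congruence_refinement_general (hgcd : IsUnit (gcd (gcd d a) b)) (p q : R) :
    (∀ u v : R, d ∣ a * u + b * v → gcd d (p * b - q * a) ∣ p * u + q * v) ∧
    (∀ (P : R × R → Prop) (i₀ j₀ : R),
      {ij : R × R | P ij ∧ d ∣ (a * ij.1 + b * ij.2) - (a * i₀ + b * j₀)}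
        =
      {ij : R × R | P ij ∧
          gcd d (p * b - q * a) ∣ (p * ij.1 + q * ij.2) - (p * i₀ + q * j₀) ∧
          d ∣ (a * ij.1 + b * ij.2) - (a * i₀ + b * j₀)}) :=
  ⟨fun _ _ => gcd_det_dvd_of_dvd hgcd p q, fun _ _ _ => Set.ext fun _ =>
    and_congr_right fun _ => (and_iff_right_of_imp (gcd_det_dvd_sub_of_dvd_sub hgcd p q)).symm⟩

end

/-- Let `d ≥ 1` and `a, b, p, q` be integers with `p, q ≥ 1` and `gcd(d,a,b) = 1`,
and set `e := gcd(d, p·b − q·a)`.  Then whenever `d ∣ a·u + b·v` one has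
`e ∣ p·u + q·v`.  Consequently, for integers `i₀, j₀`, setting `ν := p·i₀ + q·j₀`
and `k := a·i₀ + b·j₀`, the set of `(i,j)` with `p·i + q·j ≤ ν` and
`a·i + b·j ≡ k (mod d)` coincides with the set of `(i,j)` with `p·i + q·j ≤ ν`,
`p·i + q·j ≡ ν (mod e)` and `a·i + b·j ≡ k (mod d)`. -/
theorem lattice_congruence_refinement
    (d a b p q : ℤ) (hd : 1 ≤ d) (hp : 1 ≤ p) (hq : 1 ≤ q)
    (hgcd : Int.gcd (Int.gcd d a : ℤ) b = 1) :
    (∀ u v : ℤ, d ∣ a * u + b * v →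
      (Int.gcd d (p * b - q * a) : ℤ) ∣ p * u + q * v) ∧
    (∀ i₀ j₀ : ℤ,
      {ij : ℤ × ℤ | p * ij.1 + q * ij.2 ≤ p * i₀ + q * j₀ ∧
          d ∣ (a * ij.1 + b * ij.2) - (a * i₀ + b * j₀)}
        =
      {ij : ℤ × ℤ | p * ij.1 + q * ij.2 ≤ p * i₀ + q * j₀ ∧
          (Int.gcd d (p * b - q * a) : ℤ) ∣ (p * ij.1 + q * ij.2) - (p * i₀ + q * j₀) ∧
          d ∣ (a * ij.1 + b * ij.2) - (a * i₀ + b * j₀)}) := by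
  have hunit : IsUnit (gcd (gcd d a) b) := by simp [← Int.coe_gcd, hgcd]
  exact (lattice_congruence_refinement_general hunit p q).imp_right fun hset i₀ j₀ => hset _ i₀ j₀
end

section
/- Let 0 < k < d and let (k_1, …, k_n) be the greedy X-decomposition of k. Then the affine lattice 𝕃(k) is exactly the Minkowski sum of k_1 copies of 𝕃(q_1), k_2 copies of 𝕃(q_2), …, and k_n copies of 𝕃(q_n); that is, (r,s) ∈ 𝕃(k) if and only if there exist points (r_{i,l}, s_{i,l}) ∈ 𝕃(q_i) for 1 ≤ i ≤ n and 1 ≤ l ≤ k_i whose componentwise sum is (r,s). (This is the monomial-lattice form of the eigenmodule decomposition 𝒪_X(k) = ⊗_{i=1}^n 𝒪_X(q_i)^{k_i}.) -/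
/-!
Put `d = Q 0`, `q = Q 1`, and let `p_0 = 0`, `p_1 = 1`, `p_{i+1} = c_i p_i - p_{i-1}`. Then
`q p_i ≡ q_i (mod d)`, so both `(q_i, 0)` and `(0, p_i)` lie in `𝕃(q_i)`, and
`q_i p_{i+1} - q_{i+1} p_i = d`, so `(q_i, -p_i)`, `(q_{i+1}, -p_{i+1})` is a basis of the lattice
`{(x, y) : x + q y ≡ 0 (mod d)}`. Computing in this basis, one sees that for `q_{i+1} ≤ m < q_i`
every `(r, s) ∈ 𝕃(m)` has `q_{i+1} ≤ r` or `p_{i+1} ≤ s`, so that `(q_{i+1}, 0)` or `(0, p_{i+1})`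
can be split off: `𝕃(m) = 𝕃(q_{i+1}) + 𝕃(m - q_{i+1})`. Following the greedy algorithm this gives
`𝕃(k) = ∑ k_i 𝕃(q_i) + 𝕃(0)`, and the last summand is absorbed because `𝕃(m) + 𝕃(0) = 𝕃(m)`.
-/

lemma hjRem_nonneg {Q : ℕ → ℤ} {i : ℕ} (hQ : Q i ≠ 0) (k : ℤ) : 0 ≤ hjRem Q k i := by
  cases i <;> exact Int.emod_nonneg _ hQ

lemma hjRem_lt_of_pos {Q : ℕ → ℤ} {i : ℕ} (hQ : 0 < Q i) (k : ℤ) : hjRem Q k i < Q i := by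
  cases i <;> exact Int.emod_lt_of_pos _ hQ

lemma toNat_hjGreedy_succ_mul_add_hjRem {Q : ℕ → ℤ} {i : ℕ} (hQ : Q i ≠ 0)
    (hQ' : 0 ≤ Q (i + 1)) (k : ℤ) :
    ((hjGreedy Q k (i + 1)).toNat : ℤ) * Q (i + 1) + hjRem Q k (i + 1) = hjRem Q k i := by
  have hdigit : 0 ≤ hjGreedy Q k (i + 1) := Int.ediv_nonneg (hjRem_nonneg hQ k) hQ'
  rw [Int.toNat_of_nonneg hdigit]
  exact Int.ediv_mul_add_emod _ _

lemma sum_add_eq_sum_of_mem {ι M : Type*} [AddCommMonoid M] {s : Finset ι} {f : ι → M} {i : ι}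
    {z : M} (hi : i ∈ s) (hz : f i + z = f i) : ∑ j ∈ s, f j + z = ∑ j ∈ s, f j := by
  classical
  rw [← Finset.add_sum_erase s f hi, add_right_comm, hz]

/-- The affine lattice `𝕃(m)` of `X(d;1,q)`: the exponents `(r, s)` of the monomials in the
eigenmodule `𝒪_X(m)`. Here `m` is any integer, as only its class modulo `d` matters. -/
def eigenLattice (d q m : ℤ) : Set (ℤ × ℤ) :=
  {x | 0 ≤ x.1 ∧ 0 ≤ x.2 ∧ d ∣ x.1 + q * x.2 - m}

/-- The vectors `(u, -p)` and `(v, -p')` form a basis, of determinant `-d`, of the lattice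
`{(x, y) : x + q y ≡ 0 (mod d)}`, with `u > v ≥ 0` and `0 ≤ p < p'`. It is satisfied by consecutive
terms of the Hirzebruch–Jung sequence and of its dual. -/
structure IsStaircaseBasis (d q u v p p' : ℤ) : Prop where
  right_nonneg : 0 ≤ v
  right_lt_left : v < u
  dual_nonneg : 0 ≤ p
  dual_lt : p < p'
  det : u * p' - v * p = d
  dvd_left : d ∣ q * p - u
  dvd_right : d ∣ q * p' - v

/-- `Q 0 > Q 1 > ⋯ > Q n > 0` is an initial segment of the Hirzebruch–Jung sequence of `Q 0 / Q 1`,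
with partial quotients `C 1, …, C (n - 1)`. The full sequence of a coprime pair is the case
`Q n = 1`. -/
structure IsHJChain_s8 (Q C : ℕ → ℤ) (n : ℕ) : Prop where
  pos_last : 0 < Q n
  succ_lt : ∀ i < n, Q (i + 1) < Q i
  recurrence : ∀ i, i + 1 < n → Q i = C (i + 1) * Q (i + 1) - Q (i + 2)

/-- The dual Hirzebruch–Jung sequence `p_0 = 0`, `p_1 = 1`, `p_{i+2} = c_{i+1} p_{i+1} - p_i`, which
gives the points `(0, p_i)` of `𝕃(q_i)`. -/
def hjDual (C : ℕ → ℤ) : ℕ → ℤ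
  | 0 => 0
  | 1 => 1
  | i + 2 => C (i + 1) * hjDual C (i + 1) - hjDual C i

lemma exists_coords_of_dvd {R : Type*} [CommRing R] [IsDomain R] {d q u v p p' x y : R}
    (hd : d ≠ 0) (hdet : u * p' - v * p = d) (hu : d ∣ q * p - u) (hv : d ∣ q * p' - v)
    (hxy : d ∣ x - q * y) : ∃ a b, x = a * u + b * v ∧ y = a * p + b * p' := by
  obtain ⟨e, he⟩ := hxy
  obtain ⟨f, hf⟩ := hu
  obtain ⟨g, hg⟩ := hv
  -- Cramer's rule: `d` divides both numerators `x p' - y v` and `y u - x p`.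
  refine ⟨p' * e + y * g, -(p * e + y * f), mul_left_cancel₀ hd ?_, mul_left_cancel₀ hd ?_⟩
  · linear_combination (-x) * hdet + u * (p' * he + y * hg) - v * (p * he + y * hf)
  · linear_combination (-y) * hdet + p * (p' * he + y * hg) - p' * (p * he + y * hf)

lemma le_combination_or_le_combination {u v p p' a b : ℤ} (hv : 0 ≤ v) (hvu : v < u) (hp : 0 ≤ p)
    (hpp' : p < p') (hx : 0 < a * u + b * v) (hy : 0 ≤ a * p + b * p') :
    u ≤ a * u + b * v ∨ p' ≤ a * p + b * p' := by
  rcases le_or_gt a 0 with ha | ha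
  · have hab : 0 < a + b := by
      refine pos_of_mul_pos_left (b := v) ?_ hv
      calc 0 < a * u + b * v := hx
        _ ≤ a * v + b * v := by gcongr ?_ + _; exact mul_le_mul_of_nonpos_left hvu.le ha
        _ = (a + b) * v := by ring
    right
    calc p' ≤ (a + b) * p' := le_mul_of_one_le_left (by omega) hab
      _ = a * p' + b * p' := by ring
      _ ≤ a * p + b * p' := by gcongr ?_ + _; exact mul_le_mul_of_nonpos_left hpp'.le ha
  · have hab : 0 < a + b := by
      refine pos_of_mul_pos_left (b := p') ?_ (by omega)
      calc 0 ≤ a * p + b * p' := hy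
        _ < a * p' + b * p' := by gcongr
        _ = (a + b) * p' := by ring
    left
    rcases le_or_gt 0 b with hb | hb
    · calc u ≤ a * u := le_mul_of_one_le_left (by omega) ha
        _ ≤ a * u + b * v := le_add_of_nonneg_right (mul_nonneg hb hv)
    · calc u ≤ (a + b) * u := le_mul_of_one_le_left (by omega) hab
        _ = a * u + b * u := by ring
        _ ≤ a * u + b * v := by gcongr _ + ?_; exact mul_le_mul_of_nonpos_left hvu.le hb.le

namespace IsStaircaseBasis

variable {d q u v p p' : ℤ}

lemma modulus_pos (h : IsStaircaseBasis d q u v p p') : 0 < d := by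
  obtain ⟨hv, hvu, hp, hpp', hdet, -, -⟩ := h
  calc 0 ≤ v * (p' - p) := mul_nonneg hv (sub_nonneg.2 hpp'.le)
    _ = v * p' - v * p := by ring
    _ < u * p' - v * p := by
      have hp' : 0 < p' := hp.trans_lt hpp'
      gcongr
    _ = d := hdet

lemma next (h : IsStaircaseBasis d q u v p p') {w c : ℤ} (hw : 0 ≤ w) (hwv : w < v)
    (hc : u = c * v - w) : IsStaircaseBasis d q v w p' (c * p' - p) where
  right_nonneg := hw
  right_lt_left := hwv
  dual_nonneg := h.dual_nonneg.trans h.dual_lt.le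
  dual_lt := by
    have two_le : 2 ≤ c := by
      have hcv : 1 * v < c * v := by linarith [h.right_lt_left]
      exact lt_of_mul_lt_mul_right hcv h.right_nonneg
    have hp' : 0 ≤ p' := h.dual_nonneg.trans h.dual_lt.le
    calc p' < 2 * p' - p := by linarith [h.dual_lt]
      _ ≤ c * p' - p := by gcongr
  det := by
    rw [← h.det, hc]
    ring
  dvd_left := h.dvd_right
  dvd_right := by
    obtain ⟨e, he⟩ := h.dvd_left
    obtain ⟨f, hf⟩ := h.dvd_right
    exact ⟨c * f - e, by linear_combination c * hf - he - hc⟩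

lemma le_or_le_of_mem_eigenLattice (h : IsStaircaseBasis d q u v p p') {m : ℤ} (hvm : v ≤ m)
    (hmu : m < u) {x : ℤ × ℤ} (hx : x ∈ eigenLattice d q m) : v ≤ x.1 ∨ p' ≤ x.2 := by
  obtain ⟨hr, hs, e, he⟩ := hx
  by_contra! hsmall
  have hdvd' : d ∣ (m - x.1) - q * x.2 := ⟨-e, by linear_combination -he⟩
  obtain ⟨a, b, ha, hb⟩ :=
    exists_coords_of_dvd h.modulus_pos.ne' h.det h.dvd_left h.dvd_right hdvd'
  have hlarge : u ≤ m - x.1 ∨ p' ≤ x.2 := by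
    rw [ha, hb]
    exact le_combination_or_le_combination h.right_nonneg h.right_lt_left h.dual_nonneg h.dual_lt
      (by omega) (by omega)
  omega

end IsStaircaseBasis

namespace IsHJChain_s8

variable {Q C : ℕ → ℤ} {n i : ℕ}

lemma pos_s8 (h : IsHJChain_s8 Q C n) (hi : i ≤ n) : 0 < Q i := by
  induction hi using Nat.decreasingInduction with
  | self => exact h.pos_last
  | of_succ i hi ih => exact ih.trans (h.succ_lt i hi)

lemma isStaircaseBasis (h : IsHJChain_s8 Q C n) (hi : i < n) :
    IsStaircaseBasis (Q 0) (Q 1) (Q i) (Q (i + 1)) (hjDual C i) (hjDual C (i + 1)) := by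
  induction i with
  | zero => constructor <;> simp [hjDual, (h.pos_s8 hi).le, h.succ_lt 0 hi]
  | succ i ih => exact (ih (by omega)).next (h.pos_s8 hi).le (h.succ_lt _ hi) (h.recurrence i hi)

end IsHJChain_s8

section Minkowski

open scoped Pointwise

lemma mem_sum_sum_iff {ι κ M : Type*} [AddCommMonoid M] {s : Finset ι} {t : ι → Finset κ}
    {A : ι → κ → Set M} {x : M} :
    x ∈ ∑ i ∈ s, ∑ l ∈ t i, A i l ↔
      ∃ f : ι → κ → M, (∀ i ∈ s, ∀ l ∈ t i, f i l ∈ A i l) ∧ ∑ i ∈ s, ∑ l ∈ t i, f i l = x := by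
  simp only [Finset.sum_sigma', Set.mem_finsetSum]
  constructor
  · rintro ⟨f, hf, hx⟩
    exact ⟨fun i l => f ⟨i, l⟩, fun i hi l hl => hf (i := ⟨i, l⟩) (Finset.mem_sigma.2 ⟨hi, hl⟩), hx⟩
  · rintro ⟨f, hf, hx⟩
    refine ⟨fun y => f y.1 y.2, fun {y} hy => ?_, hx⟩
    exact hf _ (Finset.mem_sigma.1 hy).1 _ (Finset.mem_sigma.1 hy).2

lemma mem_sum_sum_eigenLattice_iff {ι κ : Type*} {s : Finset ι} {t : ι → Finset κ} {d q : ℤ}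
    {m : ι → ℤ} {a b : ℤ} :
    (a, b) ∈ ∑ i ∈ s, ∑ _l ∈ t i, eigenLattice d q (m i) ↔
      ∃ ρ σ : ι → κ → ℤ,
        (∀ i ∈ s, ∀ l ∈ t i, 0 ≤ ρ i l ∧ 0 ≤ σ i l ∧ d ∣ ρ i l + q * σ i l - m i) ∧
        a = ∑ i ∈ s, ∑ l ∈ t i, ρ i l ∧ b = ∑ i ∈ s, ∑ l ∈ t i, σ i l := by
  simp only [mem_sum_sum_iff, Prod.ext_iff, Prod.fst_sum, Prod.snd_sum]
  constructor
  · rintro ⟨f, hf, ha, hb⟩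
    exact ⟨fun i l => (f i l).1, fun i l => (f i l).2, hf, ha.symm, hb.symm⟩
  · rintro ⟨ρ, σ, hmem, ha, hb⟩
    exact ⟨fun i l => (ρ i l, σ i l), hmem, ha.symm, hb.symm⟩

lemma eigenLattice_emod (d q m : ℤ) : eigenLattice d q (m % d) = eigenLattice d q m := by
  ext x
  have hdvd : d ∣ x.1 + q * x.2 - m % d ↔ d ∣ x.1 + q * x.2 - m := by
    simp only [Int.dvd_iff_emod_eq_zero, Int.sub_emod_emod]
  simp only [eigenLattice, Set.mem_ofPred_eq, hdvd]

lemma eigenLattice_add_subset (d q m m' : ℤ) :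
    eigenLattice d q m + eigenLattice d q m' ⊆ eigenLattice d q (m + m') := by
  rintro _ ⟨⟨a, b⟩, ⟨ha, hb, e, he⟩, ⟨a', b'⟩, ⟨ha', hb', e', he'⟩, rfl⟩
  refine ⟨add_nonneg ha ha', add_nonneg hb hb', e + e', ?_⟩
  simp only [Prod.mk_add_mk]
  linear_combination he + he'

lemma zero_mem_eigenLattice_iff {d q m : ℤ} : 0 ∈ eigenLattice d q m ↔ d ∣ m := by
  simp [eigenLattice]

lemma eigenLattice_add_eigenLattice_zero (d q m : ℤ) :
    eigenLattice d q m + eigenLattice d q 0 = eigenLattice d q m := by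
  apply subset_antisymm
  · simpa using eigenLattice_add_subset d q m 0
  · exact Set.subset_add_left _ (zero_mem_eigenLattice_iff.2 (dvd_zero d))

namespace IsStaircaseBasis

variable {d q u v p p' : ℤ}

lemma eigenLattice_add (h : IsStaircaseBasis d q u v p p') {t : ℤ} (ht : 0 ≤ t)
    (htu : v + t < u) :
    eigenLattice d q v + eigenLattice d q t = eigenLattice d q (v + t) := by
  refine (eigenLattice_add_subset d q v t).antisymm ?_
  rintro ⟨r, s⟩ hrs
  have ⟨hr, hs, e, he⟩ := hrs
  rcases h.le_or_le_of_mem_eigenLattice (by omega) htu hrs with hle | hle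
  · refine ⟨(v, 0), ⟨h.right_nonneg, le_rfl, by simp⟩, (r - v, s), ⟨sub_nonneg.2 hle, hs, e, ?_⟩,
      by simp⟩
    linear_combination he
  · obtain ⟨f, hf⟩ := h.dvd_right
    have hp' : 0 ≤ p' := h.dual_nonneg.trans h.dual_lt.le
    refine ⟨(0, p'), ⟨le_rfl, hp', f, ?_⟩, (r, s - p'), ⟨hr, sub_nonneg.2 hle, e - f, ?_⟩, by simp⟩
    · linear_combination hf
    · linear_combination he - hf

lemma sum_eigenLattice_add (h : IsStaircaseBasis d q u v p p') (g : ℕ) {t : ℤ} (ht : 0 ≤ t)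
    (htu : g * v + t < u) :
    ∑ _l ∈ Finset.range g, eigenLattice d q v + eigenLattice d q t =
      eigenLattice d q (g * v + t) := by
  induction g generalizing t with
  | zero => simp
  | succ g ih =>
    have hassoc : ((g + 1 : ℕ) : ℤ) * v + t = g * v + (v + t) := by
      push_cast
      ring
    have hgv : 0 ≤ g * v := mul_nonneg g.cast_nonneg h.right_nonneg
    have hv := h.right_nonneg
    rw [hassoc] at htu ⊢
    rw [Finset.sum_range_succ, add_assoc, h.eigenLattice_add ht (by omega), ih (by omega) htu]

end IsStaircaseBasis

lemma IsHJChain_s8.sum_eigenLattice_add_hjRem {Q C : ℕ → ℤ} {n j : ℕ} (h : IsHJChain_s8 Q C n) (k : ℤ)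
    (hj : j ≤ n) :
    ∑ i ∈ Finset.Icc 1 j, ∑ _l ∈ Finset.range (hjGreedy Q k i).toNat,
        eigenLattice (Q 0) (Q 1) (Q i) + eigenLattice (Q 0) (Q 1) (hjRem Q k j) =
      eigenLattice (Q 0) (Q 1) k := by
  induction j with
  | zero => simpa [hjRem] using eigenLattice_emod (Q 0) (Q 1) k
  | succ j ih =>
    have hQj := h.pos_s8 (Nat.le_of_succ_le hj)
    have hdigit := toNat_hjGreedy_succ_mul_add_hjRem hQj.ne' (h.pos_s8 hj).le k
    have hlt := hjRem_lt_of_pos hQj k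
    rw [← hdigit] at hlt
    rw [Finset.sum_Icc_succ_top (by omega), add_assoc,
      (h.isStaircaseBasis hj).sum_eigenLattice_add _ (hjRem_nonneg (h.pos_s8 hj).ne' k) hlt, hdigit,
      ih (Nat.le_of_succ_le hj)]

theorem eigenmodule_decomposition_lattice_general {Q C : ℕ → ℤ} {n : ℕ} (h : IsHJChain_s8 Q C n)
    {k : ℤ} (hk : ¬ Q 0 ∣ k) (hrem : hjRem Q k n = 0) :
    eigenLattice (Q 0) (Q 1) k =
      ∑ i ∈ Finset.Icc 1 n, ∑ _l ∈ Finset.range (hjGreedy Q k i).toNat,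
        eigenLattice (Q 0) (Q 1) (Q i) := by
  have hsum := h.sum_eigenLattice_add_hjRem k le_rfl
  rw [hrem] at hsum
  obtain ⟨i, hi, hdigit⟩ : ∃ i ∈ Finset.Icc 1 n, 0 < (hjGreedy Q k i).toNat := by
    by_contra! hzero
    rw [Finset.sum_eq_zero fun i hi => by simp [Nat.le_zero.1 (hzero i hi)], zero_add] at hsum
    exact hk (zero_mem_eigenLattice_iff.1 (hsum ▸ zero_mem_eigenLattice_iff.2 (dvd_zero _)))
  rw [← hsum]
  exact sum_add_eq_sum_of_mem hi <| sum_add_eq_sum_of_mem (Finset.mem_range.2 hdigit) <|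
    eigenLattice_add_eigenLattice_zero _ _ _

end Minkowski

/-- **Hirzebruch–Jung data** of `d/q` for coprime `d > q ≥ 1`:
`q_0 = d > q_1 = q > ⋯ > q_n = 1 > q_{n+1} = 0`, `c_i ≥ 2` with
`q_{i-1} = c_i q_i − q_{i+1}`.  For `0 ≤ m`, `𝕃(m)` is the affine lattice
`{(r,s) ∈ ℤ≥0² : r + q·s ≡ m (mod d)}`.

**Statement:** for `0 < k < d` with greedy `X`-decomposition `(k_1, …, k_n)`,
the lattice `𝕃(k)` is the Minkowski sum of `k_i` copies of `𝕃(q_i)` for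
`1 ≤ i ≤ n`:  `(r,s) ∈ 𝕃(k)` iff there are points `(ρ_{i,l}, σ_{i,l}) ∈ 𝕃(q_i)`
(`1 ≤ i ≤ n`, `0 ≤ l < k_i`) whose componentwise sum is `(r,s)`.
(Monomial-lattice form of `𝒪_X(k) = ⊗_{i=1}^n 𝒪_X(q_i)^{k_i}`.) -/
theorem eigenmodule_decomposition_lattice
    (n : ℕ) (d q : ℤ) (Q C : ℕ → ℤ)
    (hn : 1 ≤ n) (hq1 : 1 ≤ q) (hqd : q < d) (hcop : Int.gcd d q = 1)
    (hQ0 : Q 0 = d) (hQ1 : Q 1 = q) (hQn : Q n = 1) (hQtop : Q (n + 1) = 0)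
    (hQdec : ∀ i, i ≤ n → Q (i + 1) < Q i)
    (hC : ∀ i, 1 ≤ i → i ≤ n → Q (i - 1) = C i * Q i - Q (i + 1))
    (hC2 : ∀ i, 1 ≤ i → i ≤ n → 2 ≤ C i)
    (k : ℤ) (hk0 : 0 < k) (hkd : k < d) :
    ∀ r s : ℤ,
      (0 ≤ r ∧ 0 ≤ s ∧ d ∣ r + q * s - k) ↔
      ∃ ρ σ : ℕ → ℕ → ℤ,
        (∀ i ∈ Finset.Icc 1 n, ∀ l ∈ Finset.range (hjGreedy Q k i).toNat,
          0 ≤ ρ i l ∧ 0 ≤ σ i l ∧ d ∣ ρ i l + q * σ i l - Q i) ∧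
        r = ∑ i ∈ Finset.Icc 1 n, ∑ l ∈ Finset.range (hjGreedy Q k i).toNat, ρ i l ∧
        s = ∑ i ∈ Finset.Icc 1 n, ∑ l ∈ Finset.range (hjGreedy Q k i).toNat, σ i l := by
  subst hQ0 hQ1
  have hchain : IsHJChain_s8 Q C n :=
    ⟨by omega, fun i hi => hQdec i hi.le, fun i hi => hC (i + 1) (by omega) hi.le⟩
  have hk : ¬ Q 0 ∣ k := fun hdvd => hkd.not_ge (Int.le_of_dvd hk0 hdvd)
  have hrem : hjRem Q k n = 0 := by
    have hnonneg := hjRem_nonneg hchain.pos_last.ne' k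
    have hlt := hjRem_lt_of_pos hchain.pos_last k
    omega
  intro r s
  rw [← mem_sum_sum_eigenLattice_iff, ← eigenmodule_decomposition_lattice_general hchain hk hrem]
  rfl
end

section
/- Let w := d − 1 − q. The greedy X-decomposition of w is (c_1 − 2, c_2 − 2, …, c_n − 2); in particular d − 1 − q = Σ_{i=1}^n (c_i − 2)·q_i, and moreover for every 1 ≤ j ≤ n the tail satisfies Σ_{i=j}^n (c_i − 2)·q_i = q_{j−1} − q_j − 1. (This is the arithmetic content of the decomposition 𝒪_X(w) = ⊗_{i=1}^n 𝒪_X(q_i)^{c_i−2} of the canonical eigenmodule.) -/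
lemma sum_Ioc_eq_add_sum_Ioc_succ {M : Type*} [AddCommMonoid M] {j n : ℕ} (hj : j < n)
    (f : ℕ → M) :
    ∑ i ∈ Finset.Ioc j n, f i = f (j + 1) + ∑ i ∈ Finset.Ioc (j + 1) n, f i := by
  rw [← Finset.insert_Ioc_add_one_left_eq_Ioc hj, Finset.sum_insert Finset.left_notMem_Ioc]

section Greedy

variable {n : ℕ} {Q a : ℕ → ℤ}

lemma hjRem_sum_Ioc
    (h : ∀ j ≤ n, ∑ i ∈ Finset.Ioc j n, a i * Q i ∈ Set.Ico 0 (Q j)) {j : ℕ} (hj : j ≤ n) :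
    hjRem Q (∑ i ∈ Finset.Ioc 0 n, a i * Q i) j = ∑ i ∈ Finset.Ioc j n, a i * Q i := by
  induction j with
  | zero => exact Int.emod_eq_of_lt (h 0 hj).1 (h 0 hj).2
  | succ j ih =>
    rw [hjRem, ih (by omega), sum_Ioc_eq_add_sum_Ioc_succ hj, Int.mul_add_emod_self_right]
    exact Int.emod_eq_of_lt (h (j + 1) hj).1 (h (j + 1) hj).2

theorem hjGreedy_sum_Ioc
    (h : ∀ j ≤ n, ∑ i ∈ Finset.Ioc j n, a i * Q i ∈ Set.Ico 0 (Q j)) {i : ℕ} (hi : i < n) :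
    hjGreedy Q (∑ i ∈ Finset.Ioc 0 n, a i * Q i) (i + 1) = a (i + 1) := by
  obtain ⟨hnonneg, hlt⟩ := h (i + 1) hi
  rw [hjGreedy, hjRem_sum_Ioc h hi.le, sum_Ioc_eq_add_sum_Ioc_succ hi,
    Int.mul_add_ediv_right _ _ (hnonneg.trans_lt hlt).ne', Int.ediv_eq_zero_of_lt hnonneg hlt,
    add_zero]

end Greedy

lemma sum_Ioc_sub_two_mul {R : Type*} [Ring R] {n : ℕ} {Q C : ℕ → R}
    (hC : ∀ i < n, Q i = C (i + 1) * Q (i + 1) - Q (i + 2)) {j : ℕ} (hj : j ≤ n) :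
    ∑ i ∈ Finset.Ioc j n, (C i - 2) * Q i = (Q j - Q (j + 1)) - (Q n - Q (n + 1)) := by
  induction hj using Nat.decreasingInduction with
  | self => simp only [Finset.Ioc_self, Finset.sum_empty, sub_self]
  | of_succ j hj ih =>
    rw [sum_Ioc_eq_add_sum_Ioc_succ hj, ih, hC j hj]
    noncomm_ring

lemma two_le_of_lt_mul_sub {b c r : ℤ} (hb : 0 ≤ b) (hr : 0 ≤ r) (h : b < c * b - r) : 2 ≤ c := by
  have : 1 * b < c * b := by linarith
  exact lt_of_mul_lt_mul_right this hb

lemma sum_Ioc_sub_two_mul_mem_Ico {n : ℕ} {Q C : ℕ → ℤ} (hQtop : Q (n + 1) = 0)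
    (hQdec : ∀ i ≤ n, Q (i + 1) < Q i)
    (hC : ∀ i < n, Q i = C (i + 1) * Q (i + 1) - Q (i + 2)) {j : ℕ} (hj : j ≤ n) :
    ∑ i ∈ Finset.Ioc j n, (C i - 2) * Q i ∈ Set.Ico 0 (Q j) := by
  have hanti : StrictAntiOn Q (Set.Iic (n + 1)) :=
    strictAntiOn_Iic_of_succ_lt fun i hi => hQdec i (Nat.le_of_lt_succ hi)
  have hnonneg (i : ℕ) (hi : i ≤ n + 1) : 0 ≤ Q i :=
    hQtop.ge.trans (hanti.antitoneOn hi Set.self_mem_Iic hi)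
  have hC2 (i : ℕ) (hi : i < n) : 2 ≤ C (i + 1) :=
    two_le_of_lt_mul_sub (hnonneg (i + 1) (by omega)) (hnonneg (i + 2) (by omega))
      ((hQdec i hi.le).trans_eq (hC i hi))
  constructor
  · refine Finset.sum_nonneg fun i hi => ?_
    obtain ⟨hji, hin⟩ := Finset.mem_Ioc.mp hi
    obtain ⟨i, rfl⟩ := Nat.exists_eq_add_one_of_ne_zero (Nat.ne_zero_of_lt hji)
    exact mul_nonneg (sub_nonneg.mpr (hC2 i hin)) (hnonneg (i + 1) (by omega))
  · have hQn : 0 < Q n := hQtop ▸ hQdec n le_rfl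
    have hQj : 0 ≤ Q (j + 1) := hnonneg (j + 1) (by omega)
    rw [sum_Ioc_sub_two_mul hC hj]
    linarith

-- `Q n` is the greatest common divisor of `Q 0` and `Q 1`.
theorem canonical_greedy_decomposition_general {n : ℕ} {Q C : ℕ → ℤ} (hQtop : Q (n + 1) = 0)
    (hQdec : ∀ i, i ≤ n → Q (i + 1) < Q i)
    (hC : ∀ i, 1 ≤ i → i ≤ n → Q (i - 1) = C i * Q i - Q (i + 1)) :
    (∀ i, 1 ≤ i → i ≤ n → hjGreedy Q (Q 0 - Q n - Q 1) i = C i - 2) ∧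
    (Q 0 - Q n - Q 1 = ∑ i ∈ Finset.Icc 1 n, (C i - 2) * Q i) ∧
    (∀ j, 1 ≤ j → j ≤ n →
      ∑ i ∈ Finset.Icc j n, (C i - 2) * Q i = Q (j - 1) - Q j - Q n) := by
  have hC' (i : ℕ) (hi : i < n) : Q i = C (i + 1) * Q (i + 1) - Q (i + 2) :=
    hC (i + 1) i.succ_pos hi
  have tail (j : ℕ) (hj : j ≤ n) :
      ∑ i ∈ Finset.Ioc j n, (C i - 2) * Q i = Q j - Q (j + 1) - Q n := by
    rw [sum_Ioc_sub_two_mul hC' hj, hQtop, sub_zero]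
  have total : Q 0 - Q n - Q 1 = ∑ i ∈ Finset.Ioc 0 n, (C i - 2) * Q i := by
    rw [tail 0 n.zero_le, sub_right_comm]
  refine ⟨fun i hi hin => ?_, total, fun j hj hjn => ?_⟩
  · obtain ⟨i, rfl⟩ := Nat.exists_eq_add_of_le' hi
    rw [total]
    exact hjGreedy_sum_Ioc (a := fun i => C i - 2)
      (fun j hj => sum_Ioc_sub_two_mul_mem_Ico hQtop hQdec hC' hj) hin
  · obtain ⟨j, rfl⟩ := Nat.exists_eq_add_of_le' hj
    rw [Finset.Icc_add_one_left_eq_Ioc, tail j (by omega), Nat.add_sub_cancel]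

/-- **Hirzebruch–Jung data** of `d/q` for coprime `d > q ≥ 1`:
`q_0 = d > q_1 = q > ⋯ > q_n = 1 > q_{n+1} = 0`, `c_i ≥ 2` with
`q_{i-1} = c_i q_i − q_{i+1}`.

**Statement:** with `w := d − 1 − q`, the greedy `X`-decomposition of `w` is
`(c_1 − 2, …, c_n − 2)`; in particular `d − 1 − q = Σ_{i=1}^n (c_i − 2) q_i`,
and for every `1 ≤ j ≤ n` the tail satisfies
`Σ_{i=j}^n (c_i − 2) q_i = q_{j−1} − q_j − 1`.
(Arithmetic content of `𝒪_X(w) = ⊗_{i=1}^n 𝒪_X(q_i)^{c_i−2}`.) -/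
theorem canonical_greedy_decomposition
    (n : ℕ) (d q : ℤ) (Q C : ℕ → ℤ)
    (hn : 1 ≤ n) (hq1 : 1 ≤ q) (hqd : q < d) (hcop : Int.gcd d q = 1)
    (hQ0 : Q 0 = d) (hQ1 : Q 1 = q) (hQn : Q n = 1) (hQtop : Q (n + 1) = 0)
    (hQdec : ∀ i, i ≤ n → Q (i + 1) < Q i)
    (hC : ∀ i, 1 ≤ i → i ≤ n → Q (i - 1) = C i * Q i - Q (i + 1))
    (hC2 : ∀ i, 1 ≤ i → i ≤ n → 2 ≤ C i) :
    (∀ i, 1 ≤ i → i ≤ n → hjGreedy Q (d - 1 - q) i = C i - 2) ∧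
    (d - 1 - q = ∑ i ∈ Finset.Icc 1 n, (C i - 2) * Q i) ∧
    (∀ j, 1 ≤ j → j ≤ n →
      ∑ i ∈ Finset.Icc j n, (C i - 2) * Q i = Q (j - 1) - Q j - 1) := by
  subst hQ0 hQ1
  simpa only [hQn] using canonical_greedy_decomposition_general hQtop hQdec hC
end

section
/- Fix 1 ≤ i ≤ n and an integer t ≥ 1 with t·q_i < d, and assume that the greedy X-decomposition of t·q_i is concentrated at position i (digit t at position i, digit 0 elsewhere). Then every (r,s) ∈ ℤ≥0² with r + q·s ≡ t·q_i (mod d) satisfies q̄_i·r + q_i·s ≥ t·q_i·q̄_i. (Equivalently: there are no lattice points of 𝕃(t·q_i) strictly below the compact face of the Minkowski sum of t copies of the Newton polygon of x^{q_i} − y^{q̄_i}; for t = 1 this says the Newton polygon of the curvette x^{q_i} − y^{q̄_i} ∈ 𝒪_X(q_i) has a single compact face, joining (q_i,0) and (0,q̄_i).) -/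
theorem hjRem_lt (Q : ℕ → ℤ) (k : ℤ) {m : ℕ} (hm : 0 < Q m) : hjRem Q k m < Q m := by
  cases m <;> exact Int.emod_lt_of_pos _ hm

theorem hjRem_eq_self_of_hjGreedy_eq_zero {Q : ℕ → ℤ} {k : ℤ} {m : ℕ}
    (h : ∀ j ≤ m, hjGreedy Q k j = 0) : hjRem Q k m = k := by
  induction m with
  | zero =>
    have hdigit : k / Q 0 = 0 := h 0 le_rfl
    rw [hjRem, Int.emod_def, hdigit, mul_zero, sub_zero]
  | succ m ih =>
    have hrem : hjRem Q k m = k := ih fun j hj => h j (by omega)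
    have hdigit : hjRem Q k m / Q (m + 1) = 0 := h (m + 1) le_rfl
    rw [hjRem, Int.emod_def, hdigit, mul_zero, sub_zero, hrem]

theorem lt_of_hjGreedy_eq_zero {Q : ℕ → ℤ} {k : ℤ} {m : ℕ} (hm : 0 < Q m)
    (h : ∀ j ≤ m, hjGreedy Q k j = 0) : k < Q m :=
  hjRem_eq_self_of_hjGreedy_eq_zero h ▸ hjRem_lt Q k hm

/-- The numerators `p_j` of the Hirzebruch–Jung continued fraction with entries `C 1, C 2, …`; they
will turn out to be the dual sequence `q̄_j`.  The entry `C 0` is ignored. -/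
def hjNumer {R : Type*} [CommRing R] (C : ℕ → R) : ℕ → R
  | 0 => 0
  | 1 => 1
  | j + 2 => C (j + 1) * hjNumer C (j + 1) - hjNumer C j

section CommRing

variable {R : Type*} [CommRing R] {n : ℕ} {Q C : ℕ → R}

theorem mul_hjNumer_succ_sub (hQ : ∀ j < n, Q j = C (j + 1) * Q (j + 1) - Q (j + 2)) {j : ℕ}
    (hj : j ≤ n) : Q j * hjNumer C (j + 1) - Q (j + 1) * hjNumer C j = Q 0 := by
  induction j with
  | zero => simp only [hjNumer, mul_one, mul_zero, sub_zero]
  | succ j ih =>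
    rw [← ih (by omega), hjNumer]
    linear_combination -hjNumer C (j + 1) * hQ j hj

theorem dvd_mul_hjNumer_sub (hQ : ∀ j < n, Q j = C (j + 1) * Q (j + 1) - Q (j + 2)) :
    ∀ {j : ℕ}, j ≤ n + 1 → Q 0 ∣ Q 1 * hjNumer C j - Q j
  | 0, _ => by simp [hjNumer]
  | 1, _ => by simp [hjNumer]
  | j + 2, hj => by
    have hsplit : Q 1 * hjNumer C (j + 2) - Q (j + 2) =
        C (j + 1) * (Q 1 * hjNumer C (j + 1) - Q (j + 1)) - (Q 1 * hjNumer C j - Q j) := by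
      rw [hjNumer]
      linear_combination -hQ j (by omega)
    rw [hsplit]
    exact dvd_sub ((dvd_mul_hjNumer_sub hQ (by omega)).mul_left _)
      (dvd_mul_hjNumer_sub hQ (by omega))

theorem dvd_mul_add_mul_of_dvd {d q u v p a : R} (huv : d ∣ u + q * v) (hpa : d ∣ q * p - a) :
    d ∣ p * u + a * v := by
  have hsplit : p * u + a * v = p * (u + q * v) - v * (q * p - a) := by ring
  exact hsplit ▸ dvd_sub (huv.mul_left p) (hpa.mul_left v)

-- Cramer's rule: the coordinates have denominator `d`, and the congruences clear it.
theorem exists_coords_of_det_eq [IsDomain R] {d q a a' p p' u v : R} (hd : d ≠ 0)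
    (hdet : a * p' - a' * p = d) (hpa : d ∣ q * p - a) (hpa' : d ∣ q * p' - a')
    (huv : d ∣ u + q * v) :
    ∃ x y : R, u = x * a + y * a' ∧ v = -(x * p + y * p') := by
  obtain ⟨x, hx⟩ := dvd_mul_add_mul_of_dvd huv hpa'
  obtain ⟨y, hy⟩ := dvd_mul_add_mul_of_dvd huv hpa
  refine ⟨x, -y, mul_left_cancel₀ hd ?_, mul_left_cancel₀ hd ?_⟩
  · linear_combination a * hx - a' * hy - u * hdet
  · linear_combination p' * hy - p * hx - v * hdet

end CommRing

theorem hjNumer_nonneg_and_lt_succ {R : Type*} [CommRing R] [LinearOrder R] [IsStrictOrderedRing R]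
    {n : ℕ} {C : ℕ → R} (hC : ∀ j < n, 2 ≤ C (j + 1)) {j : ℕ} (hj : j ≤ n) :
    0 ≤ hjNumer C j ∧ hjNumer C j < hjNumer C (j + 1) := by
  induction j with
  | zero => simp [hjNumer]
  | succ j ih =>
    obtain ⟨hnonneg, hlt⟩ := ih (by omega)
    have hpos : 0 < hjNumer C (j + 1) := hnonneg.trans_lt hlt
    have hdouble := mul_le_mul_of_nonneg_right (hC j hj) hpos.le
    refine ⟨hpos.le, ?_⟩
    rw [hjNumer]
    linarith

/-- `Q 0 > Q 1 > ⋯ > Q n > Q (n + 1) = 0` are the remainders, and `C 1, …, C n` the entries, of the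
Hirzebruch–Jung expansion of `Q 0 / Q 1`.  The recursion `q_{i-1} = c_i q_i - q_{i+1}` is indexed by
`j = i - 1`, which avoids truncated subtraction. -/
structure IsHJExpansion_s14 (n : ℕ) (Q C : ℕ → ℤ) : Prop where
  eq_mul_sub : ∀ j < n, Q j = C (j + 1) * Q (j + 1) - Q (j + 2)
  succ_lt : ∀ j ≤ n, Q (j + 1) < Q j
  top : Q (n + 1) = 0

namespace IsHJExpansion_s14

variable {n : ℕ} {Q C : ℕ → ℤ}

theorem nonneg (h : IsHJExpansion_s14 n Q C) {j : ℕ} (hj : j ≤ n + 1) : 0 ≤ Q j := by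
  induction hj using Nat.decreasingInduction with
  | self => exact h.top.ge
  | of_succ j hj ih => exact ih.trans (h.succ_lt j (by omega)).le

theorem pos_s14 (h : IsHJExpansion_s14 n Q C) {j : ℕ} (hj : j ≤ n) : 0 < Q j :=
  (h.nonneg (by omega)).trans_lt (h.succ_lt j hj)

theorem two_le_entry (h : IsHJExpansion_s14 n Q C) {j : ℕ} (hj : j < n) : 2 ≤ C (j + 1) := by
  have hmul : 1 * Q (j + 1) < C (j + 1) * Q (j + 1) := by
    linarith [h.eq_mul_sub j hj, h.succ_lt j hj.le, h.nonneg (j := j + 2) (by omega)]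
  exact lt_of_mul_lt_mul_right hmul (h.pos_s14 hj).le

theorem hjNumer_nonneg (h : IsHJExpansion_s14 n Q C) {j : ℕ} (hj : j ≤ n) : 0 ≤ hjNumer C j :=
  (hjNumer_nonneg_and_lt_succ (fun _ => h.two_le_entry) hj).1

theorem hjNumer_lt_succ (h : IsHJExpansion_s14 n Q C) {j : ℕ} (hj : j ≤ n) :
    hjNumer C j < hjNumer C (j + 1) :=
  (hjNumer_nonneg_and_lt_succ (fun _ => h.two_le_entry) hj).2

theorem hjNumer_succ_pos (h : IsHJExpansion_s14 n Q C) {j : ℕ} (hj : j ≤ n) : 0 < hjNumer C (j + 1) :=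
  (h.hjNumer_nonneg hj).trans_lt (h.hjNumer_lt_succ hj)

theorem hjNumer_lt (h : IsHJExpansion_s14 n Q C) {j : ℕ} (hj : j ≤ n) : hjNumer C j < Q 0 := by
  have hQ : Q (j + 1) + 1 ≤ Q j := h.succ_lt j hj
  have hlt := h.hjNumer_lt_succ hj
  calc hjNumer C j < hjNumer C (j + 1) := hlt
    _ ≤ hjNumer C (j + 1) + Q (j + 1) * (hjNumer C (j + 1) - hjNumer C j) :=
      le_add_of_nonneg_right (mul_nonneg (h.nonneg (by omega)) (sub_nonneg.2 hlt.le))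
    _ = (Q (j + 1) + 1) * hjNumer C (j + 1) - Q (j + 1) * hjNumer C j := by ring
    _ ≤ Q j * hjNumer C (j + 1) - Q (j + 1) * hjNumer C j :=
      sub_le_sub_right (mul_le_mul_of_nonneg_right hQ (h.hjNumer_succ_pos hj).le) _
    _ = Q 0 := mul_hjNumer_succ_sub h.eq_mul_sub hj

end IsHJExpansion_s14

theorem isLeast_pos_solution {d q a p : ℤ} (hdq : IsCoprime d q) (hp : 0 < p) (hpd : p < d)
    (hpa : d ∣ q * p - a) : IsLeast {x : ℤ | 0 < x ∧ d ∣ q * x - a} p := by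
  refine ⟨⟨hp, hpa⟩, fun x ⟨hx, hxa⟩ => ?_⟩
  by_contra! hlt
  have hmul : d ∣ q * (p - x) := by
    have := dvd_sub hpa hxa
    rwa [sub_sub_sub_cancel_right, ← mul_sub] at this
  have hle : d ≤ p - x := Int.le_of_dvd (sub_pos.2 hlt) (hdq.dvd_of_dvd_mul_left hmul)
  linarith

theorem IsHJExpansion_s14.isLeast_hjNumer {n : ℕ} {Q C : ℕ → ℤ} (h : IsHJExpansion_s14 n Q C)
    (hcop : IsCoprime (Q 0) (Q 1)) {j : ℕ} (hj : j + 1 ≤ n) :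
    IsLeast {x : ℤ | 0 < x ∧ Q 0 ∣ Q 1 * x - Q (j + 1)} (hjNumer C (j + 1)) :=
  isLeast_pos_solution hcop (h.hjNumer_succ_pos (by omega)) (h.hjNumer_lt hj)
    (dvd_mul_hjNumer_sub h.eq_mul_sub (by omega))

theorem snd_coord_nonpos {c t q₁ q₂ p₀ p₁ x y : ℤ} (hc : 2 ≤ c) (hq₂ : 0 ≤ q₂) (hq : q₂ < q₁)
    (hp₁ : 0 < p₁) (hp : p₀ < p₁) (ht : t * q₁ < c * q₁ - q₂)
    (hr : 0 ≤ (t + x) * q₁ + y * q₂) (hs : x * p₁ + y * (c * p₁ - p₀) ≤ 0) : y ≤ 0 := by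
  by_contra! hy
  have hq₁ : 0 < q₁ := hq₂.trans_lt hq
  have htc : t < c := lt_of_mul_lt_mul_right (by linarith) hq₁.le
  have hx : x < y - c * y :=
    lt_of_mul_lt_mul_right (by linarith [mul_lt_mul_of_pos_left hp hy]) hp₁.le
  have htx : -y < t + x :=
    lt_of_mul_lt_mul_right (by linarith [mul_lt_mul_of_pos_left hq hy]) hq₁.le
  have hcy : 0 ≤ (c - 2) * (y - 1) := mul_nonneg (by linarith) (by linarith)
  linarith

theorem IsHJExpansion_s14.mul_le_hjNumer_mul_add {n : ℕ} {Q C : ℕ → ℤ} (h : IsHJExpansion_s14 n Q C) {j : ℕ}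
    (hj : j < n) {t r s : ℤ} (ht : t * Q (j + 1) < Q j) (hr : 0 ≤ r) (hs : 0 ≤ s)
    (hrs : Q 0 ∣ r + Q 1 * s - t * Q (j + 1)) :
    t * Q (j + 1) * hjNumer C (j + 1) ≤ hjNumer C (j + 1) * r + Q (j + 1) * s := by
  have hdet := mul_hjNumer_succ_sub h.eq_mul_sub (j := j + 1) hj
  have hQ0 : 0 < Q 0 := h.pos_s14 n.zero_le
  obtain ⟨x, y, hx, hy⟩ : ∃ x y : ℤ, r - t * Q (j + 1) = x * Q (j + 1) + y * Q (j + 2) ∧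
      s = -(x * hjNumer C (j + 1) + y * hjNumer C (j + 2)) :=
    exists_coords_of_det_eq hQ0.ne' hdet (dvd_mul_hjNumer_sub h.eq_mul_sub (by omega))
      (dvd_mul_hjNumer_sub h.eq_mul_sub (by omega)) (by rwa [← add_sub_right_comm])
  have hxr : 0 ≤ (t + x) * Q (j + 1) + y * Q (j + 2) := by linarith
  have hxs : x * hjNumer C (j + 1) + y * (C (j + 1) * hjNumer C (j + 1) - hjNumer C j) ≤ 0 := by
    rw [hjNumer] at hy
    linarith
  have hy0 : y ≤ 0 :=
    snd_coord_nonpos (h.two_le_entry hj) (h.nonneg (by omega)) (h.succ_lt (j + 1) hj)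
      (h.hjNumer_succ_pos hj.le) (h.hjNumer_lt_succ hj.le) (h.eq_mul_sub j hj ▸ ht) hxr hxs
  have hform : hjNumer C (j + 1) * r + Q (j + 1) * s =
      t * Q (j + 1) * hjNumer C (j + 1) - Q 0 * y := by
    linear_combination hjNumer C (j + 1) * hx + Q (j + 1) * hy - y * hdet
  linarith [mul_nonpos_of_nonneg_of_nonpos hQ0.le hy0]

/-- **Hirzebruch–Jung data** of `d/q` for coprime `d > q ≥ 1`:
`q_0 = d > q_1 = q > ⋯ > q_n = 1 > q_{n+1} = 0`, `c_i ≥ 2` with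
`q_{i-1} = c_i q_i − q_{i+1}`; `q̄_i` is the smallest positive integer with
`q·q̄_i ≡ q_i (mod d)`.

**Statement:** fix `1 ≤ i ≤ n` and `t ≥ 1` with `t·q_i < d` such that the
greedy `X`-decomposition of `t·q_i` is concentrated at position `i` (digit `t`
there, `0` elsewhere).  Then every `(r,s) ∈ ℤ≥0²` with
`r + q·s ≡ t·q_i (mod d)` satisfies `q̄_i·r + q_i·s ≥ t·q_i·q̄_i`
(no lattice points of `𝕃(t·q_i)` lie strictly below the compact face of the
Minkowski sum of `t` copies of the Newton polygon of the curvette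
`x^{q_i} − y^{q̄_i} ∈ 𝒪_X(q_i)`). -/
theorem curvette_newton_polygon
    (n : ℕ) (d q : ℤ) (Q C Qbar : ℕ → ℤ)
    (hn : 1 ≤ n) (hq1 : 1 ≤ q) (hqd : q < d) (hcop : Int.gcd d q = 1)
    (hQ0 : Q 0 = d) (hQ1 : Q 1 = q) (hQn : Q n = 1) (hQtop : Q (n + 1) = 0)
    (hQdec : ∀ i, i ≤ n → Q (i + 1) < Q i)
    (hC : ∀ i, 1 ≤ i → i ≤ n → Q (i - 1) = C i * Q i - Q (i + 1))
    (hC2 : ∀ i, 1 ≤ i → i ≤ n → 2 ≤ C i)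
    (hQbar0 : Qbar 0 = 0) (hQbarTop : Qbar (n + 1) = d)
    (hQbarPos : ∀ i, 1 ≤ i → i ≤ n → 0 < Qbar i)
    (hQbarCong : ∀ i, 1 ≤ i → i ≤ n → d ∣ q * Qbar i - Q i)
    (hQbarMin : ∀ i, 1 ≤ i → i ≤ n → ∀ t : ℤ, 0 < t → d ∣ q * t - Q i → Qbar i ≤ t)
    (i : ℕ) (hi1 : 1 ≤ i) (hin : i ≤ n)
    (t : ℤ) (ht : 1 ≤ t) (htd : t * Q i < d)
    (hgreedy_i : hjGreedy Q (t * Q i) i = t)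
    (hgreedy_other : ∀ j, 1 ≤ j → j ≤ n → j ≠ i → hjGreedy Q (t * Q i) j = 0) :
    ∀ r s : ℤ, 0 ≤ r → 0 ≤ s → d ∣ r + q * s - t * Q i →
      t * Q i * Qbar i ≤ Qbar i * r + Q i * s := by
  subst hQ0 hQ1
  intro r s hr hs hrs
  obtain ⟨j, rfl⟩ : ∃ j, i = j + 1 := ⟨i - 1, by omega⟩
  have hexp : IsHJExpansion_s14 n Q C := ⟨fun j hj => hC (j + 1) (by omega) hj, hQdec, hQtop⟩
  have hleast : IsLeast {x : ℤ | 0 < x ∧ Q 0 ∣ Q 1 * x - Q (j + 1)} (Qbar (j + 1)) :=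
    ⟨⟨hQbarPos _ hi1 hin, hQbarCong _ hi1 hin⟩, fun x hx => hQbarMin _ hi1 hin x hx.1 hx.2⟩
  have hbar : Qbar (j + 1) = hjNumer C (j + 1) :=
    hleast.unique (hexp.isLeast_hjNumer (Int.isCoprime_iff_gcd_eq_one.2 hcop) hin)
  have hdigit_zero : hjGreedy Q (t * Q (j + 1)) 0 = 0 :=
    Int.ediv_eq_zero_of_lt (mul_nonneg (by linarith) (hexp.pos_s14 hin).le) htd
  have hlt : t * Q (j + 1) < Q j := lt_of_hjGreedy_eq_zero (hexp.pos_s14 (by omega)) fun l hl => by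
    rcases l.eq_zero_or_pos with rfl | hl0
    · exact hdigit_zero
    · exact hgreedy_other l hl0 (by omega) (by omega)
  rw [hbar]
  exact hexp.mul_le_hjNumer_mul_add hin hlt hr hs hrs
end
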